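/- For any positive integers n and s, there exist s distinct primes l_1,…,l_s such that l_i ≡ 1 (mod n) for all i, and for all i ≠ j, the prime l_i is an n-th power residue modulo l_j (i.e., there exists y with y^n ≡ l_i (mod l_j)). -/

import Mathlib

/-!
Every finitely generated commutative ring `A` of characteristic zero maps onto `𝔽_p` for
arbitrarily large primes `p`: the `ℚ`-algebra `ℚ ⊗ A` has a residue field `K = ℚ(α)` which is a
number field, the image of `A` in `K` lies in `ℤ[α][1/D]` for some integer `D ≠ 0`, and by Schur's
theorem the minimal polynomial of `α` has a root modulo some large prime `p`, which then does not
divide `D`.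

Adjoining to `ℤ` a primitive `m`-th root of unity and `n`-th roots of finitely many integers, we
find large primes `p ≡ 1 (mod m)` modulo which all these integers are `n`-th powers. If `m` is a
multiple of `n` and of all the primes already constructed, then `p` is congruent to the `n`-th
power `1` modulo each of them, so it can be added to the list.
-/

open Polynomial TensorProduct
open scoped IntermediateField nonZeroDivisors

theorem exists_natAbs_eval_mul_ne {f : ℤ[X]} (hf : f.natDegree ≠ 0) {b : ℤ} (hb : b ≠ 0) (c : ℕ) :
    ∃ x : ℤ, (f.eval (b * x)).natAbs ≠ c := by
  by_contra! h
  have hconst : f.comp (C b * X) ^ 2 = C ((c : ℤ) ^ 2) :=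
    Polynomial.funext fun x => by simp [← h x]
  have hdeg := congrArg natDegree hconst
  rw [natDegree_pow, natDegree_comp, natDegree_C_mul_X b hb, natDegree_C] at hdeg
  lia

/-- **Schur's theorem** on the prime divisors of the values of an integer polynomial. -/
theorem exists_prime_gt_exists_aeval_eq_zero {f : ℤ[X]} (hf : f.degree ≠ 0) (N : ℕ) :
    ∃ p : ℕ, p.Prime ∧ N < p ∧ ∃ a : ZMod p, aeval a f = 0 := by
  obtain hc | hc := eq_or_ne (f.coeff 0) 0
  · obtain ⟨p, hNp, hp⟩ := Nat.exists_infinite_primes (N + 1)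
    exact ⟨p, hp, hNp, 0, by simp [← coeff_zero_eq_aeval_zero', hc]⟩
  -- For `c = f(0)` and `b = N! c` one has `f(bx) = c u` with `u ≡ 1 (mod N!)`.
  set c := f.coeff 0
  let b := N.factorial * c
  have hb : b ≠ 0 := mul_ne_zero (by exact_mod_cast N.factorial_ne_zero) hc
  have hdeg : f.natDegree ≠ 0 := fun h =>
    hf (by rw [eq_C_of_natDegree_eq_zero h]; exact degree_C hc)
  obtain ⟨x, hx⟩ := exists_natAbs_eval_mul_ne hdeg hb c.natAbs
  let u := 1 + N.factorial * (x * f.divX.eval (b * x))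
  have eval_eq : f.eval (b * x) = c * u := by
    conv_lhs => rw [← f.divX_mul_X_add]
    simp only [eval_add, eval_mul, eval_X, eval_C, u, b, c]
    ring
  have hu : u.natAbs ≠ 1 := fun h => hx (by rw [eval_eq, Int.natAbs_mul, h, mul_one])
  obtain ⟨p, hp, hpu⟩ := Nat.exists_prime_and_dvd hu
  replace hpu : (p : ℤ) ∣ u := Int.natCast_dvd.2 hpu
  refine ⟨p, hp, not_le.1 fun hpN => hp.ne_one ?_, (b * x : ℤ), ?_⟩
  · have hpN : (p : ℤ) ∣ N.factorial := Int.natCast_dvd_natCast.2 (hp.dvd_factorial.2 hpN)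
    exact Nat.dvd_one.1 (Int.natCast_dvd_natCast.1 ((dvd_add_left (hpN.mul_right _)).1 hpu))
  · rw [← eq_intCast (algebraMap ℤ (ZMod p)), aeval_algebraMap_apply, coe_aeval_eq_eval, eval_eq,
      eq_intCast, ZMod.intCast_zmod_eq_zero_iff_dvd]
    exact hpu.mul_left c

section FractionField

variable (R F : Type*) {K : Type*} [CommRing R] [IsDomain R] [Field F] [Algebra R F]
  [IsFractionRing R F] [Field K] [Algebra R K] [Algebra F K] [IsScalarTower R F K]

theorem isFractionRing_adjoin_of_adjoin_eq_top {S : Set K} (hS : Algebra.adjoin F S = ⊤) :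
    IsFractionRing (Algebra.adjoin R S) K := by
  refine .of_field _ _ fun x => ?_
  obtain ⟨⟨d, hd⟩, hdx⟩ :=
    multiple_mem_adjoin_of_mem_localization_adjoin R⁰ F S x (hS ▸ Algebra.mem_top)
  have hdK : algebraMap R K d ≠ 0 := by
    rw [IsScalarTower.algebraMap_apply R F K]
    simpa using nonZeroDivisors.ne_zero hd
  exact ⟨⟨_, hdx⟩, algebraMap R _ d, by
    simp [Submonoid.smul_def, Algebra.smul_def, ← IsScalarTower.algebraMap_apply, hdK]⟩

variable (K) in
theorem exists_isIntegral_adjoin_eq_top [FiniteDimensional F K] [Algebra.IsSeparable F K] :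
    ∃ α : K, IsIntegral R α ∧ Algebra.adjoin F {α} = ⊤ := by
  obtain ⟨β, hβ⟩ := Field.exists_primitive_element F K
  have β_alg : IsAlgebraic R β :=
    (IsFractionRing.isAlgebraic_iff R F K).2 (Algebra.IsAlgebraic.isAlgebraic β)
  obtain ⟨c, hc, hα⟩ := β_alg.exists_integral_multiple
  have hcF : algebraMap R F c ≠ 0 := by simpa using hc
  have β_mem : β ∈ F⟮c • β⟯ := by
    have β_eq : (algebraMap R F c)⁻¹ • c • β = β := by
      rw [← algebraMap_smul F c β, inv_smul_smul₀ hcF]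
    simpa only [β_eq] using F⟮c • β⟯.smul_mem
      (IntermediateField.mem_adjoin_simple_self F (c • β)) (x := (algebraMap R F c)⁻¹)
  have adjoin_eq_top : F⟮c • β⟯ = ⊤ :=
    top_le_iff.1 (hβ ▸ IntermediateField.adjoin_simple_le_iff.2 β_mem)
  refine ⟨c • β, hα, ?_⟩
  rw [← IntermediateField.adjoin_simple_toSubalgebra_of_isAlgebraic
    (Algebra.IsAlgebraic.isAlgebraic _), adjoin_eq_top, IntermediateField.top_toSubalgebra]

end FractionField

theorem nonempty_ringHom_of_forall_generator_eq_div {A B K F : Type*} [CommRing A] [CommRing B]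
    [IsDomain B] [Field K] [Algebra B K] [IsFractionRing B K] [Field F]
    (φ : A →+* K) (ψ : B →+* F) {T : Set A} (hT : Algebra.adjoin ℤ T = ⊤)
    (hφ : ∀ t ∈ T, ∃ b s : B, ψ s ≠ 0 ∧ φ t = algebraMap B K b / algebraMap B K s) :
    Nonempty (A →+* F) := by
  have : (RingHom.ker ψ).IsPrime := RingHom.ker_isPrime ψ
  let C := Localization.subalgebra.ofField K (RingHom.ker ψ).primeCompl
    (RingHom.ker ψ).primeCompl_le_nonZeroDivisors
  have adjoin_le : Algebra.adjoin ℤ T ≤ (C.restrictScalars ℤ).comap φ.toIntAlgHom :=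
    Algebra.adjoin_le fun t ht => by
      obtain ⟨b, s, hs, hbs⟩ := hφ t ht
      exact ⟨b, s, hs, hbs.trans (div_eq_mul_inv _ _)⟩
  have hφC : ∀ a, φ a ∈ C := fun a => adjoin_le (hT ▸ Algebra.mem_top)
  let ψ' : C →+* F := IsLocalization.lift (M := (RingHom.ker ψ).primeCompl) (g := ψ)
    fun s => (show ψ s ≠ 0 from s.2).isUnit
  exact ⟨ψ'.comp (φ.codRestrict C hφC)⟩

theorem exists_prime_gt_nonempty_ringHom_zmod_of_numberField {A K : Type*} [CommRing A]
    [Algebra.FiniteType ℤ A] [Field K] [NumberField K] (φ : A →+* K) (N : ℕ) :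
    ∃ p : ℕ, p.Prime ∧ N < p ∧ Nonempty (A →+* ZMod p) := by
  classical
  obtain ⟨α, hα, adjoin_eq_top⟩ := exists_isIntegral_adjoin_eq_top ℤ ℚ K
  let B := Algebra.adjoin ℤ {α}
  have : IsFractionRing B K := isFractionRing_adjoin_of_adjoin_eq_top ℤ ℚ adjoin_eq_top
  have : Algebra.IsIntegral ℤ B := Algebra.IsIntegral.adjoin (by simpa using hα)
  obtain ⟨T, hT⟩ := ‹Algebra.FiniteType ℤ A›.out
  obtain ⟨⟨D, hD⟩, hDT⟩ := IsLocalizedModule.exist_integer_multiples_of_finset ℤ⁰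
    (IsScalarTower.toAlgHom ℤ B K).toLinearMap (T.image φ)
  have D_ne_zero : D ≠ 0 := nonZeroDivisors.ne_zero hD
  obtain ⟨p, hp, hlt, a, ha⟩ :=
    exists_prime_gt_exists_aeval_eq_zero (minpoly.degree_pos hα).ne' (max N D.natAbs)
  obtain ⟨hNp, hDp⟩ := max_lt_iff.1 hlt
  have : Fact p.Prime := ⟨hp⟩
  let ψ : B →+* ZMod p := (Algebra.adjoin.powerBasis' hα).lift a
    (by rwa [← Algebra.adjoin.powerBasis'_minpoly_gen hα])
  have hψD : ψ D ≠ 0 := by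
    rw [map_intCast, Ne, ZMod.intCast_zmod_eq_zero_iff_dvd, Int.natCast_dvd]
    exact Nat.not_dvd_of_pos_of_lt (Int.natAbs_pos.2 D_ne_zero) hDp
  refine ⟨p, hp, hNp, nonempty_ringHom_of_forall_generator_eq_div φ ψ hT fun t ht => ?_⟩
  obtain ⟨b, hb : (b : K) = D • φ t⟩ := hDT _ (Finset.mem_image_of_mem φ ht)
  have hDK : (D : K) ≠ 0 := by exact_mod_cast D_ne_zero
  refine ⟨b, D, hψD, ?_⟩
  rw [map_intCast, eq_div_iff hDK, mul_comm, ← zsmul_eq_mul, ← hb]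
  rfl

theorem numberField_of_finiteType (K : Type*) [Field K] [Algebra ℚ K] [Algebra.FiniteType ℚ K] :
    NumberField K := by
  have := algebraRat.charZero K
  obtain rfl : ‹Algebra ℚ K› = DivisionRing.toRatAlgebra := Subsingleton.elim _ _
  exact { to_finiteDimensional := finite_of_finite_type_of_isJacobsonRing ℚ K }

theorem exists_prime_gt_nonempty_ringHom_zmod (A : Type*) [CommRing A] [CharZero A]
    [Algebra.FiniteType ℤ A] (N : ℕ) :
    ∃ p : ℕ, p.Prime ∧ N < p ∧ Nonempty (A →+* ZMod p) := by
  have : Nontrivial (ℚ ⊗[ℤ] A) :=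
    Algebra.TensorProduct.nontrivial_of_algebraMap_injective_of_flat_left ℤ ℚ A
      (algebraMap ℤ A).injective_int
  obtain ⟨P, _⟩ := Ideal.exists_maximal (ℚ ⊗[ℤ] A)
  let := Ideal.Quotient.field P
  have : NumberField (ℚ ⊗[ℤ] A ⧸ P) := numberField_of_finiteType _
  exact exists_prime_gt_nonempty_ringHom_zmod_of_numberField
    ((Ideal.Quotient.mk P).comp Algebra.TensorProduct.includeRight.toRingHom) N

theorem exists_prime_gt_forall_exists_aeval_eq_zero (S : Finset ℤ[X])
    (hS : ∀ f ∈ S, f.degree ≠ 0) (N : ℕ) :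
    ∃ p : ℕ, p.Prime ∧ N < p ∧ ∀ f ∈ S, ∃ a : ZMod p, aeval a f = 0 := by
  classical
  choose! x hx using fun f hf => IsAlgClosed.exists_aeval_eq_zero ℂ f (hS f hf)
  let A := Algebra.adjoin ℤ (S.image x : Set ℂ)
  have : Algebra.FiniteType ℤ A := A.fg_iff_finiteType.1 (Subalgebra.fg_adjoin_finset _)
  obtain ⟨p, hp, hNp, ⟨φ⟩⟩ := exists_prime_gt_nonempty_ringHom_zmod A N
  refine ⟨p, hp, hNp, fun f hf => ?_⟩
  let r : A := ⟨x f, Algebra.subset_adjoin (Finset.mem_coe.2 (Finset.mem_image_of_mem x hf))⟩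
  have hr : aeval r f = 0 :=
    Subtype.val_injective ((aeval_algHom_apply A.val r f).symm.trans (hx f hf))
  exact ⟨φ r, by simpa [hr] using aeval_algHom_apply φ.toIntAlgHom r f⟩

theorem modEq_one_of_aeval_cyclotomic_eq_zero {m p : ℕ} (hp : p.Prime) (hpm : ¬ p ∣ m)
    {ζ : ZMod p} (hζ : aeval ζ (cyclotomic m ℤ) = 0) : p ≡ 1 [MOD m] := by
  have : Fact p.Prime := ⟨hp⟩
  have : NeZero (m : ZMod p) := ⟨by rwa [Ne, CharP.cast_eq_zero_iff (ZMod p) p]⟩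
  have hprim : IsPrimitiveRoot ζ m := by
    rwa [← isRoot_cyclotomic_iff, ← map_cyclotomic_int, IsRoot.def, eval_map, ← algebraMap_int_eq,
      ← aeval_def]
  have hm : m ≠ 0 := fun h => hpm (h ▸ dvd_zero p)
  refine ((Nat.modEq_iff_dvd' hp.one_le).2 ?_).symm
  rw [hprim.eq_orderOf]
  exact ZMod.orderOf_dvd_card_sub_one (hprim.ne_zero hm)

theorem exists_prime_gt_modEq_one_forall_exists_pow_eq {m n : ℕ} (hm : m ≠ 0) (hn : n ≠ 0)
    (S : Finset ℤ) (N : ℕ) :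
    ∃ p : ℕ, p.Prime ∧ N < p ∧ p ≡ 1 [MOD m] ∧ ∀ a ∈ S, ∃ y : ZMod p, y ^ n = a := by
  classical
  have hdeg : ∀ f ∈ insert (cyclotomic m ℤ) (S.image fun a => X ^ n - C a), f.degree ≠ 0 := by
    simp only [Finset.forall_mem_insert, Finset.forall_mem_image, degree_cyclotomic,
      degree_X_pow_sub_C (Nat.pos_of_ne_zero hn)]
    simp [hm, hn]
  obtain ⟨p, hp, hNp, hroot⟩ := exists_prime_gt_forall_exists_aeval_eq_zero _ hdeg (max m N)
  obtain ⟨hmp, hNp⟩ := max_lt_iff.1 hNp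
  simp only [Finset.forall_mem_insert, Finset.forall_mem_image] at hroot
  obtain ⟨⟨ζ, hζ⟩, hpow⟩ := hroot
  have hpm : ¬ p ∣ m := Nat.not_dvd_of_pos_of_lt (Nat.pos_of_ne_zero hm) hmp
  refine ⟨p, hp, hNp, modEq_one_of_aeval_cyclotomic_eq_zero hp hpm hζ, fun a ha => ?_⟩
  obtain ⟨y, hy⟩ := hpow ha
  exact ⟨y, by simpa [sub_eq_zero] using hy⟩

theorem exists_prime_forall_mutual_pow_modEq {n : ℕ} (hn : n ≠ 0) (S : Finset ℕ)
    (hS : ∀ q ∈ S, q ≠ 0) :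
    ∃ p : ℕ, p.Prime ∧ p ≡ 1 [MOD n] ∧
      ∀ q ∈ S, q ≠ p ∧ (∃ y : ℕ, y ^ n ≡ q [MOD p]) ∧ ∃ y : ℕ, y ^ n ≡ p [MOD q] := by
  have hm : n * ∏ q ∈ S, q ≠ 0 := mul_ne_zero hn (Finset.prod_ne_zero_iff.2 hS)
  obtain ⟨p, hp, hlt, hp1, hpow⟩ :=
    exists_prime_gt_modEq_one_forall_exists_pow_eq hm hn (S.map Nat.castEmbedding) (S.sup id)
  have : NeZero p := ⟨hp.ne_zero⟩
  refine ⟨p, hp, hp1.of_mul_right _, fun q hq => ⟨?_, ?_, 1, ?_⟩⟩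
  · exact ((Finset.le_sup (f := id) hq).trans_lt hlt).ne
  · obtain ⟨y, hy⟩ := hpow q (Finset.mem_map_of_mem _ hq)
    exact ⟨y.val, by simpa [← ZMod.natCast_eq_natCast_iff] using hy⟩
  · simpa using (hp1.of_dvd ((Finset.dvd_prod_of_mem _ hq).mul_left n)).symm

theorem stmt_4_general (n : ℕ) (hn : 0 < n) :
    ∃ l : ℕ → ℕ, Function.Injective l ∧
      (∀ i, (l i).Prime ∧ l i ≡ 1 [MOD n]) ∧
      (∀ i j, i ≠ j → ∃ y : ℕ, y ^ n ≡ l i [MOD l j]) := by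
  let r (p q : ℕ) : Prop :=
    p ≠ q ∧ (∃ y : ℕ, y ^ n ≡ p [MOD q]) ∧ ∃ y : ℕ, y ^ n ≡ q [MOD p]
  have : Std.Symm r := ⟨fun _ _ h => ⟨h.1.symm, h.2.symm⟩⟩
  obtain ⟨l, hl, hr⟩ := exists_seq_of_forall_finset_exists'
    (fun p => p.Prime ∧ p ≡ 1 [MOD n]) r fun S hS => by
      simpa only [and_assoc] using
        exists_prime_forall_mutual_pow_modEq hn.ne' S fun q hq => (hS q hq).1.ne_zero
  exact ⟨l, Function.injective_iff_pairwise_ne.2 fun i j hij => (hr hij).1, hl,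
    fun i j hij => (hr hij).2.1⟩

theorem stmt_4 (n s : ℕ) (hn : 0 < n) (hs : 0 < s) :
    ∃ l : Fin s → ℕ, Function.Injective l ∧
      (∀ i, (l i).Prime ∧ l i ≡ 1 [MOD n]) ∧
      (∀ i j, i ≠ j → ∃ y : ℕ, y ^ n ≡ l i [MOD l j]) := by
  obtain ⟨l, l_inj, hl, hpow⟩ := stmt_4_general n hn
  exact ⟨fun i => l i, l_inj.comp Fin.val_injective, fun i => hl i,
    fun i j hij => hpow i j (Fin.val_ne_of_ne hij)⟩
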